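/- Generalized helicoids: let k ≥ 1, let n₁, …, n_k be positive integers, and let c₁, …, c_k be real constants. On the open subset of ℝ^{2n₁} × ⋯ × ℝ^{2n_k} where each Uⱼ(Xⱼ,Yⱼ) = ‖Xⱼ‖² − ‖Yⱼ‖² ≠ 0, the linear combination F = Σⱼ cⱼ·Fⱼ of the independent CH-functions Fⱼ(Xⱼ,Yⱼ) = (1/2)·arctan(Vⱼ/Uⱼ) (each in its own block of variables) satisfies ΔF = 0, Δ_∞F = 0, and hence the minimal hypersurface equation (1 + ‖∇F‖²)·ΔF − Δ_∞F = 0; thus its (multi-valued) graph is a minimal hypersurface in ℝ^{2(n₁+⋯+n_k)+1}. -/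

import Mathlib

/-!
With `wᵢ = xᵢ + √-1 yᵢ` one has `U + √-1 V = S := ∑ wᵢ²`, so a CH-function is locally, up to a
constant, the imaginary part of the holomorphic function `(log S) / 2`, and `dF = Im (∑ gᵢ dwᵢ)`
with `gᵢ = wᵢ / S`. The imaginary part of a holomorphic function is harmonic, and its
infinity-Laplacian is `-Im (∑ Hᵢₗ ḡᵢ ḡₗ)`, where `H` is the complex Hessian. Here
`Hᵢₗ = δᵢₗ / S - 2 wᵢ wₗ / S²`, and the sum equals `1 / |S|² - 2 (∑ |wᵢ|²)² / |S|⁴`, which is real.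
Functions of independent variables do not interact: the two Laplacians of their sum are the sums
of their Laplacians.
-/

noncomputable section

variable {ι : Type*} [Fintype ι] [DecidableEq ι]

/-- The `i`-th partial derivative `∂F/∂zᵢ` of `F : ℝ^ι → ℝ` at `x`. -/
def pd (F : EuclideanSpace ℝ ι → ℝ) (x : EuclideanSpace ℝ ι) (i : ι) : ℝ :=
  fderiv ℝ F x (EuclideanSpace.single i 1)

/-- The Laplacian `ΔF = Σᵢ ∂²F/∂zᵢ²` at `x`. -/
def lap (F : EuclideanSpace ℝ ι → ℝ) (x : EuclideanSpace ℝ ι) : ℝ :=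
  ∑ i, fderiv ℝ (fun y => pd F y i) x (EuclideanSpace.single i 1)

/-- The infinity-Laplacian `Δ_∞F = Σ_{i,j} (∂F/∂zᵢ)(∂F/∂zⱼ)(∂²F/∂zᵢ∂zⱼ)` at `x`. -/
def infLap (F : EuclideanSpace ℝ ι → ℝ) (x : EuclideanSpace ℝ ι) : ℝ :=
  ∑ i, ∑ j, pd F x i * pd F x j * fderiv ℝ (fun y => pd F y i) x (EuclideanSpace.single j 1)

/-- The squared norm `‖∇F‖²` of the gradient of `F` at `x`. -/
def gradSq (F : EuclideanSpace ℝ ι → ℝ) (x : EuclideanSpace ℝ ι) : ℝ :=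
  ∑ i, (pd F x i) ^ 2

/-- `Uⱼ(Xⱼ,Yⱼ) = ‖Xⱼ‖² − ‖Yⱼ‖²` for the `j`-th block of `ℝ^{2n₁} × ⋯ × ℝ^{2n_k}`. -/
def Ublock (k : ℕ) (n : Fin k → ℕ) (j : Fin k)
    (z : EuclideanSpace ℝ ((j : Fin k) × (Fin (n j) ⊕ Fin (n j)))) : ℝ :=
  ∑ i : Fin (n j), (z ⟨j, Sum.inl i⟩) ^ 2 - ∑ i : Fin (n j), (z ⟨j, Sum.inr i⟩) ^ 2

/-- `Vⱼ(Xⱼ,Yⱼ) = 2⟨Xⱼ,Yⱼ⟩` for the `j`-th block. -/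
def Vblock (k : ℕ) (n : Fin k → ℕ) (j : Fin k)
    (z : EuclideanSpace ℝ ((j : Fin k) × (Fin (n j) ⊕ Fin (n j)))) : ℝ :=
  2 * ∑ i : Fin (n j), z ⟨j, Sum.inl i⟩ * z ⟨j, Sum.inr i⟩

/-- The linear combination `F = Σⱼ cⱼ·Fⱼ` of the independent CH-functions
`Fⱼ = (1/2)·arctan(Vⱼ/Uⱼ)`. -/
def Fcomb (k : ℕ) (n : Fin k → ℕ) (c : Fin k → ℝ)
    (z : EuclideanSpace ℝ ((j : Fin k) × (Fin (n j) ⊕ Fin (n j)))) : ℝ :=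
  ∑ j : Fin k, c j * ((1 / 2) * Real.arctan (Vblock k n j z / Ublock k n j z))

open Filter Topology Gradient ComplexConjugate

section GradientCoordinates

lemma gradient_apply (F : EuclideanSpace ℝ ι → ℝ) (x : EuclideanSpace ℝ ι) (i : ι) :
    (∇ F x) i = pd F x i := by
  rw [pd, ← inner_gradient_left, EuclideanSpace.inner_single_right]
  simp

lemma infLap_eq_sum_fderiv_gradient (F : EuclideanSpace ℝ ι → ℝ) (x : EuclideanSpace ℝ ι) :
    infLap F x = ∑ i, pd F x i * fderiv ℝ (fun y => pd F y i) x (∇ F x) := by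
  have hgrad : ∇ F x = ∑ j, pd F x j • EuclideanSpace.single j (1 : ℝ) := by
    ext i
    simp [gradient_apply, Pi.single_apply]
  simp only [infLap, hgrad, map_sum, map_smul, smul_eq_mul, Finset.mul_sum, mul_assoc]

lemma pd_const_mul (c : ℝ) (F : EuclideanSpace ℝ ι → ℝ) (x : EuclideanSpace ℝ ι) (i : ι) :
    pd (fun y => c * F y) x i = c * pd F x i :=
  DFunLike.congr_fun (congr_fun (fderiv_const_smul_field c (f := F)) x) _

lemma fderiv_pd_const_mul (c : ℝ) (F : EuclideanSpace ℝ ι → ℝ) (x v : EuclideanSpace ℝ ι)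
    (i : ι) :
    fderiv ℝ (fun y => pd (fun u => c * F u) y i) x v = c * fderiv ℝ (fun y => pd F y i) x v := by
  simp only [pd_const_mul]
  exact DFunLike.congr_fun (congr_fun (fderiv_const_smul_field c (f := fun y => pd F y i)) x) v

lemma lap_const_mul (c : ℝ) (F : EuclideanSpace ℝ ι → ℝ) (x : EuclideanSpace ℝ ι) :
    lap (fun y => c * F y) x = c * lap F x := by
  simp only [lap, fderiv_pd_const_mul, Finset.mul_sum]

lemma infLap_const_mul (c : ℝ) (F : EuclideanSpace ℝ ι → ℝ) (x : EuclideanSpace ℝ ι) :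
    infLap (fun y => c * F y) x = c ^ 3 * infLap F x := by
  simp only [infLap, Finset.mul_sum]
  refine Finset.sum_congr rfl fun i _ => Finset.sum_congr rfl fun j _ => ?_
  rw [fderiv_pd_const_mul, pd_const_mul, pd_const_mul]
  ring

lemma differentiableAt_pd {F : EuclideanSpace ℝ ι → ℝ} {x : EuclideanSpace ℝ ι}
    (hF : ContDiffAt ℝ 2 F x) (i : ι) : DifferentiableAt ℝ (fun y => pd F y i) x :=
  ((hF.fderiv_right (m := 1) (by norm_num)).differentiableAt one_ne_zero).clm_apply
    (differentiableAt_const _)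

end GradientCoordinates

section IndependentSums

variable {J : Type*} {κ : J → Type*}

/-- The projection of `∏ j, ℝ^(κ j)`, whose coordinates are indexed by the sigma type, onto its
`j`-th factor. -/
def blockProj (j : J) :
    EuclideanSpace ℝ ((j : J) × κ j) →L[ℝ] EuclideanSpace ℝ (κ j) :=
  (EuclideanSpace.equiv (κ j) ℝ).symm.toContinuousLinearMap.comp
    (ContinuousLinearMap.pi fun p => EuclideanSpace.proj ⟨j, p⟩)

lemma blockProj_apply (j : J) (z : EuclideanSpace ℝ ((j : J) × κ j)) (p : κ j) :
    blockProj j z p = z ⟨j, p⟩ := rfl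

section Single

variable [DecidableEq J] [∀ j, DecidableEq (κ j)]

lemma blockProj_single_self (j : J) (p : κ j) :
    blockProj j (EuclideanSpace.single ⟨j, p⟩ (1 : ℝ)) = EuclideanSpace.single p 1 := by
  ext q
  simp [blockProj_apply]

lemma blockProj_single_of_ne {j l : J} (h : l ≠ j) (p : κ j) :
    blockProj l (EuclideanSpace.single ⟨j, p⟩ (1 : ℝ)) = 0 := by
  ext q
  simp [blockProj_apply, h]

end Single

variable [Fintype J] [∀ j, Fintype (κ j)] {f : ∀ j, EuclideanSpace ℝ (κ j) → ℝ}
  {z : EuclideanSpace ℝ ((j : J) × κ j)}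

lemma pd_sum_blockProj [DecidableEq J] [∀ j, DecidableEq (κ j)]
    (hf : ∀ j, DifferentiableAt ℝ (f j) (blockProj j z)) (j : J) (p : κ j) :
    pd (fun y => ∑ l, f l (blockProj l y)) z ⟨j, p⟩ = pd (f j) (blockProj j z) p := by
  have hsum : HasFDerivAt (fun y => ∑ l, f l (blockProj l y))
      (∑ l, (fderiv ℝ (f l) (blockProj l z)).comp (blockProj l)) z :=
    .fun_sum fun l _ => (hf l).hasFDerivAt.comp z (blockProj l).hasFDerivAt
  have hpd : pd (fun y => ∑ l, f l (blockProj l y)) z ⟨j, p⟩ =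
      ∑ l, fderiv ℝ (f l) (blockProj l z) (blockProj l (EuclideanSpace.single ⟨j, p⟩ 1)) := by
    rw [pd, hsum.fderiv]
    simp
  rw [hpd, Fintype.sum_eq_single j fun l hl => by rw [blockProj_single_of_ne hl, map_zero],
    blockProj_single_self, pd]

lemma blockProj_gradient_sum (hf : ∀ j, DifferentiableAt ℝ (f j) (blockProj j z)) (j : J) :
    blockProj j (∇ (fun y => ∑ l, f l (blockProj l y)) z) = ∇ (f j) (blockProj j z) := by
  classical
  ext p
  rw [blockProj_apply, gradient_apply, gradient_apply, pd_sum_blockProj hf]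

variable [DecidableEq J] [∀ j, DecidableEq (κ j)]

lemma fderiv_pd_sum_blockProj (hf : ∀ j, ContDiffAt ℝ 2 (f j) (blockProj j z)) (j : J) (p : κ j)
    (v : EuclideanSpace ℝ ((j : J) × κ j)) :
    fderiv ℝ (fun y => pd (fun u => ∑ l, f l (blockProj l u)) y ⟨j, p⟩) z v =
      fderiv ℝ (fun y => pd (f j) y p) (blockProj j z) (blockProj j v) := by
  have hdiff : ∀ᶠ y in 𝓝 z, ∀ l, DifferentiableAt ℝ (f l) (blockProj l y) :=
    eventually_all.2 fun l => (blockProj l).continuous.continuousAt.eventually <|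
      ((hf l).eventually (by simp)).mono fun _ h => h.differentiableAt two_ne_zero
  have hpd : (fun y => pd (fun u => ∑ l, f l (blockProj l u)) y ⟨j, p⟩) =ᶠ[𝓝 z]
      (fun y => pd (f j) y p) ∘ blockProj j :=
    hdiff.mono fun y hy => pd_sum_blockProj hy j p
  rw [hpd.fderiv_eq,
    fderiv_comp z (differentiableAt_pd (hf j) p) (blockProj j).differentiableAt,
    (blockProj j).fderiv, ContinuousLinearMap.comp_apply]

theorem lap_sum_blockProj (hf : ∀ j, ContDiffAt ℝ 2 (f j) (blockProj j z)) :
    lap (fun y => ∑ j, f j (blockProj j y)) z = ∑ j, lap (f j) (blockProj j z) := by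
  simp only [lap, Fintype.sum_sigma, fderiv_pd_sum_blockProj hf, blockProj_single_self]

theorem infLap_sum_blockProj (hf : ∀ j, ContDiffAt ℝ 2 (f j) (blockProj j z)) :
    infLap (fun y => ∑ j, f j (blockProj j y)) z = ∑ j, infLap (f j) (blockProj j z) := by
  have hdiff j := (hf j).differentiableAt two_ne_zero
  simp only [infLap_eq_sum_fderiv_gradient, Fintype.sum_sigma, fderiv_pd_sum_blockProj hf,
    pd_sum_blockProj hdiff, blockProj_gradient_sum hdiff]

end IndependentSums

section HolomorphicCoordinates

variable {κ : Type*}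

/-- The complex coordinate `wᵢ = xᵢ + √-1 yᵢ` on `ℝ^κ × ℝ^κ`. -/
def complexCoord (i : κ) : EuclideanSpace ℝ (κ ⊕ κ) →L[ℝ] ℂ :=
  Complex.ofRealCLM.comp (EuclideanSpace.proj (Sum.inl i)) +
    Complex.I • Complex.ofRealCLM.comp (EuclideanSpace.proj (Sum.inr i))

lemma complexCoord_apply (i : κ) (x : EuclideanSpace ℝ (κ ⊕ κ)) :
    complexCoord i x = x (Sum.inl i) + Complex.I * x (Sum.inr i) := rfl

variable [Fintype κ]

/-- The form `∑ aᵢ dwᵢ` of type `(1, 0)` on `ℝ^κ × ℝ^κ`. A complex-valued function is holomorphic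
at a point exactly when its differential there has this shape. -/
def holomorphicForm (a : κ → ℂ) : EuclideanSpace ℝ (κ ⊕ κ) →L[ℝ] ℂ :=
  ∑ i, a i • complexCoord i

lemma holomorphicForm_apply (a : κ → ℂ) (v : EuclideanSpace ℝ (κ ⊕ κ)) :
    holomorphicForm a v = ∑ i, a i * complexCoord i v := by
  simp [holomorphicForm]

lemma holomorphicForm_single_inl [DecidableEq κ] (a : κ → ℂ) (i : κ) :
    holomorphicForm a (EuclideanSpace.single (Sum.inl i) 1) = a i := by
  simp [holomorphicForm_apply, complexCoord_apply, apply_ite]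

lemma holomorphicForm_single_inr [DecidableEq κ] (a : κ → ℂ) (i : κ) :
    holomorphicForm a (EuclideanSpace.single (Sum.inr i) 1) = Complex.I * a i := by
  simp [holomorphicForm_apply, complexCoord_apply, apply_ite, mul_comm]

section ImaginaryPart

variable {F : EuclideanSpace ℝ (κ ⊕ κ) → ℝ} {x : EuclideanSpace ℝ (κ ⊕ κ)}

lemma pd_inl_eq_im [DecidableEq κ] {a : κ → ℂ}
    (hF : HasFDerivAt F (Complex.imCLM.comp (holomorphicForm a)) x) (i : κ) :
    pd F x (Sum.inl i) = (a i).im := by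
  rw [pd, hF.fderiv, ContinuousLinearMap.comp_apply, holomorphicForm_single_inl,
    Complex.imCLM_apply]

lemma pd_inr_eq_re [DecidableEq κ] {a : κ → ℂ}
    (hF : HasFDerivAt F (Complex.imCLM.comp (holomorphicForm a)) x) (i : κ) :
    pd F x (Sum.inr i) = (a i).re := by
  rw [pd, hF.fderiv, ContinuousLinearMap.comp_apply, holomorphicForm_single_inr,
    Complex.imCLM_apply, Complex.I_mul_im]

lemma complexCoord_gradient {a : κ → ℂ}
    (hF : HasFDerivAt F (Complex.imCLM.comp (holomorphicForm a)) x) (i : κ) :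
    complexCoord i (∇ F x) = Complex.I * conj (a i) := by
  classical
  rw [complexCoord_apply, gradient_apply, gradient_apply, pd_inl_eq_im hF, pd_inr_eq_re hF]
  apply Complex.ext <;> simp

variable [DecidableEq κ] {g : κ → EuclideanSpace ℝ (κ ⊕ κ) → ℂ} {H : κ → κ → ℂ}

lemma fderiv_pd_inl_eq_im
    (hF : ∀ᶠ y in 𝓝 x, HasFDerivAt F (Complex.imCLM.comp (holomorphicForm (g · y))) y)
    (hg : ∀ i, HasFDerivAt (g i) (holomorphicForm (H i)) x) (i : κ)
    (v : EuclideanSpace ℝ (κ ⊕ κ)) :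
    fderiv ℝ (fun y => pd F y (Sum.inl i)) x v = (holomorphicForm (H i) v).im := by
  have hpd : (fun y => pd F y (Sum.inl i)) =ᶠ[𝓝 x] Complex.imCLM ∘ g i :=
    hF.mono fun y hy => pd_inl_eq_im hy i
  rw [hpd.fderiv_eq, (Complex.imCLM.hasFDerivAt.comp x (hg i)).fderiv,
    ContinuousLinearMap.comp_apply, Complex.imCLM_apply]

lemma fderiv_pd_inr_eq_re
    (hF : ∀ᶠ y in 𝓝 x, HasFDerivAt F (Complex.imCLM.comp (holomorphicForm (g · y))) y)
    (hg : ∀ i, HasFDerivAt (g i) (holomorphicForm (H i)) x) (i : κ)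
    (v : EuclideanSpace ℝ (κ ⊕ κ)) :
    fderiv ℝ (fun y => pd F y (Sum.inr i)) x v = (holomorphicForm (H i) v).re := by
  have hpd : (fun y => pd F y (Sum.inr i)) =ᶠ[𝓝 x] Complex.reCLM ∘ g i :=
    hF.mono fun y hy => pd_inr_eq_re hy i
  rw [hpd.fderiv_eq, (Complex.reCLM.hasFDerivAt.comp x (hg i)).fderiv,
    ContinuousLinearMap.comp_apply, Complex.reCLM_apply]

theorem lap_eq_zero_of_hasFDerivAt_im
    (hF : ∀ᶠ y in 𝓝 x, HasFDerivAt F (Complex.imCLM.comp (holomorphicForm (g · y))) y)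
    (hg : ∀ i, HasFDerivAt (g i) (holomorphicForm (H i)) x) : lap F x = 0 := by
  simp only [lap, Fintype.sum_sum_type, fderiv_pd_inl_eq_im hF hg, fderiv_pd_inr_eq_re hF hg,
    holomorphicForm_single_inl, holomorphicForm_single_inr, Complex.I_mul_re,
    Finset.sum_neg_distrib, add_neg_cancel]

theorem infLap_eq_neg_im_of_hasFDerivAt_im
    (hF : ∀ᶠ y in 𝓝 x, HasFDerivAt F (Complex.imCLM.comp (holomorphicForm (g · y))) y)
    (hg : ∀ i, HasFDerivAt (g i) (holomorphicForm (H i)) x) :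
    infLap F x = -(∑ i, ∑ l, H i l * conj (g i x) * conj (g l x)).im := by
  have hFx := hF.self_of_nhds
  have hterm (i : κ) :
      (g i x).im * (holomorphicForm (H i) (∇ F x)).im +
          (g i x).re * (holomorphicForm (H i) (∇ F x)).re =
        -(∑ l, H i l * conj (g i x) * conj (g l x)).im :=
    calc _ = (conj (g i x) * holomorphicForm (H i) (∇ F x)).re := by
          simp only [Complex.mul_re, Complex.conj_re, Complex.conj_im]
          ring
      _ = (Complex.I * ∑ l, H i l * conj (g i x) * conj (g l x)).re := by
          simp only [holomorphicForm_apply, complexCoord_gradient hFx, Finset.mul_sum]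
          congr! 2 with l
          ring
      _ = _ := Complex.I_mul_re _
  simp only [infLap_eq_sum_fderiv_gradient, Fintype.sum_sum_type, fderiv_pd_inl_eq_im hF hg,
    fderiv_pd_inr_eq_re hF hg, pd_inl_eq_im hFx, pd_inr_eq_re hFx, ← Finset.sum_add_distrib,
    hterm, Finset.sum_neg_distrib, Complex.im_sum]

end ImaginaryPart

end HolomorphicCoordinates

section ArctanDerivative

variable {E : Type*} [NormedAddCommGroup E] [NormedSpace ℝ E] {S : E → ℂ} {x : E}

/-- On each of the half-planes `0 < re` and `re < 0`, `arctan (im / re)` is a branch of the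
argument up to a constant, so its differential is `Im (dS / S)`. -/
lemma hasFDerivAt_arctan_im_div_re {S' : E →L[ℝ] ℂ} (hS : HasFDerivAt S S' x)
    (hre : (S x).re ≠ 0) :
    HasFDerivAt (fun y => Real.arctan ((S y).im / (S y).re))
      (Complex.imCLM.comp ((S x)⁻¹ • S')) x := by
  have him' : HasFDerivAt (fun y => (S y).im) _ x := Complex.imCLM.hasFDerivAt.comp x hS
  have hre' : HasFDerivAt (fun y => (S y).re) _ x := Complex.reCLM.hasFDerivAt.comp x hS
  have hquot := him'.fun_mul ((hasDerivAt_inv hre).comp_hasFDerivAt x hre')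
  refine hquot.arctan.congr_fderiv ?_
  ext v
  have hnorm : (S x).re ^ 2 + (S x).im ^ 2 ≠ 0 := by positivity
  simp only [Function.comp_apply, one_div, neg_smul, smul_neg, smul_add, add_apply, neg_apply,
    smul_apply, ContinuousLinearMap.comp_apply, Complex.reCLM_apply, smul_eq_mul,
    Complex.imCLM_apply, Complex.mul_im, Complex.inv_re, Complex.normSq_apply, ← sq,
    Complex.inv_im]
  field_simp
  ring

lemma contDiffAt_arctan_im_div_re {n : ℕ∞} (hS : ContDiffAt ℝ n S x)
    (hre : (S x).re ≠ 0) :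
    ContDiffAt ℝ n (fun y => Real.arctan ((S y).im / (S y).re)) x :=
  have him' : ContDiffAt ℝ n (fun y => (S y).im) x := Complex.imCLM.contDiff.contDiffAt.comp x hS
  have hre' : ContDiffAt ℝ n (fun y => (S y).re) x := Complex.reCLM.contDiff.contDiffAt.comp x hS
  (him'.fun_div hre' hre).arctan

end ArctanDerivative

section CHFunction

variable {κ : Type*} [Fintype κ]

/-- The quadratic form `S = ∑ wᵢ² = U + √-1 V` on `ℝ^κ × ℝ^κ`. -/
def complexSq (x : EuclideanSpace ℝ (κ ⊕ κ)) : ℂ := ∑ i, complexCoord i x ^ 2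

/-- The CH-function `(1/2) arctan (V / U)` on `ℝ^κ × ℝ^κ`, written with `U = re S` and `V = im S`.
It has the junk value `0` where `U = 0`. -/
def chFun (x : EuclideanSpace ℝ (κ ⊕ κ)) : ℝ :=
  1 / 2 * Real.arctan ((complexSq x).im / (complexSq x).re)

lemma complexSq_re (x : EuclideanSpace ℝ (κ ⊕ κ)) :
    (complexSq x).re = ∑ i, x (Sum.inl i) ^ 2 - ∑ i, x (Sum.inr i) ^ 2 := by
  simp [complexSq, complexCoord_apply, sq]

lemma complexSq_im (x : EuclideanSpace ℝ (κ ⊕ κ)) :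
    (complexSq x).im = 2 * ∑ i, x (Sum.inl i) * x (Sum.inr i) := by
  simp only [complexSq, complexCoord_apply, Complex.im_sum, Finset.mul_sum]
  refine Finset.sum_congr rfl fun i _ => ?_
  simp only [sq, Complex.mul_im, Complex.add_re, Complex.ofReal_re, Complex.mul_re, Complex.I_re,
    zero_mul, Complex.I_im, Complex.ofReal_im, mul_zero, sub_self, add_zero, Complex.add_im,
    one_mul, zero_add]
  ring

lemma contDiff_complexSq {n : ℕ∞} :
    ContDiff ℝ n (complexSq : EuclideanSpace ℝ (κ ⊕ κ) → ℂ) :=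
  ContDiff.sum fun i _ => (complexCoord i).contDiff.pow 2

lemma hasFDerivAt_complexSq (x : EuclideanSpace ℝ (κ ⊕ κ)) :
    HasFDerivAt complexSq (holomorphicForm fun i => 2 * complexCoord i x) x := by
  have h : HasFDerivAt complexSq (∑ i, (2 • complexCoord i x ^ (2 - 1)) • complexCoord i) x :=
    .fun_sum fun i _ => (complexCoord i).hasFDerivAt.pow 2
  refine h.congr_fderiv ?_
  simp only [holomorphicForm, nsmul_eq_mul, Nat.cast_ofNat, Nat.add_one_sub_one, pow_one]

variable {x : EuclideanSpace ℝ (κ ⊕ κ)}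

lemma contDiffAt_chFun {n : ℕ∞} (hre : (complexSq x).re ≠ 0) :
    ContDiffAt ℝ n chFun x :=
  contDiffAt_const.mul (contDiffAt_arctan_im_div_re contDiff_complexSq.contDiffAt hre)

lemma hasFDerivAt_chFun (hre : (complexSq x).re ≠ 0) :
    HasFDerivAt chFun
      (Complex.imCLM.comp (holomorphicForm fun i => complexCoord i x / complexSq x)) x := by
  refine ((hasFDerivAt_arctan_im_div_re (hasFDerivAt_complexSq x) hre).const_mul
    (1 / 2)).congr_fderiv ?_
  have hform : (holomorphicForm fun i => complexCoord i x / complexSq x) =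
      (1 / 2 : ℝ) • (complexSq x)⁻¹ • holomorphicForm fun i => 2 * complexCoord i x := by
    ext v
    simp only [smul_apply, holomorphicForm_apply, smul_eq_mul, Complex.real_smul, Finset.mul_sum]
    refine Finset.sum_congr rfl fun i _ => ?_
    push_cast
    ring
  rw [hform]
  exact (ContinuousLinearMap.comp_smul _ _ _).symm

lemma eventually_hasFDerivAt_chFun (hre : (complexSq x).re ≠ 0) :
    ∀ᶠ y in 𝓝 x, HasFDerivAt chFun
      (Complex.imCLM.comp (holomorphicForm fun i => complexCoord i y / complexSq y)) y := by
  have hcont : Continuous fun y : EuclideanSpace ℝ (κ ⊕ κ) => (complexSq y).re :=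
    Complex.continuous_re.comp (contDiff_complexSq (n := 0)).continuous
  exact (hcont.continuousAt.eventually_ne hre).mono fun y => hasFDerivAt_chFun

variable (x) in
lemma sum_conj_div_complexSq_sq :
    ∑ i, conj (complexCoord i x / complexSq x) ^ 2 = (conj (complexSq x))⁻¹ := by
  simp only [← map_pow, ← map_sum, ← map_inv₀, div_pow, ← Finset.sum_div]
  rw [← complexSq, sq, div_self_mul_self']

variable (x) in
lemma sum_mul_conj_div_complexSq :
    ∑ i, complexCoord i x * conj (complexCoord i x / complexSq x) =
      (∑ i, Complex.normSq (complexCoord i x) : ℝ) / conj (complexSq x) := by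
  simp only [map_div₀, ← mul_div_assoc, Complex.mul_conj, ← Finset.sum_div, Complex.ofReal_sum]

variable [DecidableEq κ]

/-- The complex Hessian `∂²((log S) / 2) / ∂wᵢ ∂wₗ`. -/
def chHessian (x : EuclideanSpace ℝ (κ ⊕ κ)) (i l : κ) : ℂ :=
  (if l = i then (complexSq x)⁻¹ else 0) -
    2 * complexCoord i x * complexCoord l x / complexSq x ^ 2

lemma hasFDerivAt_complexCoord_div_complexSq (hS : complexSq x ≠ 0) (i : κ) :
    HasFDerivAt (fun y => complexCoord i y / complexSq y) (holomorphicForm (chHessian x i)) x := by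
  have h := (complexCoord i).hasFDerivAt.fun_mul
    ((hasDerivAt_inv hS).comp_hasFDerivAt x (hasFDerivAt_complexSq x))
  refine h.congr_fderiv ?_
  ext v
  have hdelta : ∑ l, (if l = i then (complexSq x)⁻¹ else 0) * complexCoord l v =
      (complexSq x)⁻¹ * complexCoord i v := by
    simp only [ite_mul, zero_mul, Finset.sum_ite_eq', Finset.mem_univ, if_true]
  simp only [holomorphicForm_apply, chHessian, sub_mul, Finset.sum_sub_distrib, hdelta]
  have hquot : ∑ l, 2 * complexCoord i x * complexCoord l x / complexSq x ^ 2 * complexCoord l v =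
      complexCoord i x * ((complexSq x ^ 2)⁻¹ * ∑ l, 2 * complexCoord l x * complexCoord l v) := by
    simp only [Finset.mul_sum]
    exact Finset.sum_congr rfl fun l _ => by ring
  rw [hquot]
  simp only [Function.comp_apply, add_apply, smul_apply, holomorphicForm_apply, smul_eq_mul,
    neg_mul, mul_neg]
  ring

lemma sum_chHessian_conj_mul_conj (hS : complexSq x ≠ 0) :
    ∑ i, ∑ l, chHessian x i l * conj (complexCoord i x / complexSq x) *
        conj (complexCoord l x / complexSq x) =
      ((1 / Complex.normSq (complexSq x) - 2 * (∑ i, Complex.normSq (complexCoord i x)) ^ 2 /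
        Complex.normSq (complexSq x) ^ 2 : ℝ) : ℂ) := by
  set S := complexSq x with hSdef
  have hSconj : conj S ≠ 0 := (map_ne_zero _).2 hS
  have hterm (i l : κ) : chHessian x i l * conj (complexCoord i x / S) *
        conj (complexCoord l x / S) =
      (if l = i then S⁻¹ * conj (complexCoord i x / S) ^ 2 else 0) -
        2 / S ^ 2 * (complexCoord i x * conj (complexCoord i x / S)) *
          (complexCoord l x * conj (complexCoord l x / S)) := by
    rw [chHessian, ← hSdef]
    split_ifs with h
    · subst h
      ring
    · ring
  calc _ = S⁻¹ * ∑ i, conj (complexCoord i x / S) ^ 2 -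
        2 / S ^ 2 * (∑ i, complexCoord i x * conj (complexCoord i x / S)) ^ 2 := by
        simp only [hterm, Finset.sum_sub_distrib, Finset.sum_ite_eq', Finset.mem_univ, if_true,
          ← Finset.mul_sum, ← Finset.sum_mul]
        ring
    _ = _ := by
        rw [sum_conj_div_complexSq_sq, sum_mul_conj_div_complexSq, ← hSdef]
        push_cast
        rw [← Complex.mul_conj]
        field_simp

theorem lap_chFun (hre : (complexSq x).re ≠ 0) : lap chFun x = 0 :=
  lap_eq_zero_of_hasFDerivAt_im (eventually_hasFDerivAt_chFun hre)
    (hasFDerivAt_complexCoord_div_complexSq fun h => hre (by rw [h, Complex.zero_re]))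

theorem infLap_chFun (hre : (complexSq x).re ≠ 0) : infLap chFun x = 0 := by
  have hS : complexSq x ≠ 0 := fun h => hre (by rw [h, Complex.zero_re])
  rw [infLap_eq_neg_im_of_hasFDerivAt_im (eventually_hasFDerivAt_chFun hre)
      (hasFDerivAt_complexCoord_div_complexSq hS),
    sum_chHessian_conj_mul_conj hS, Complex.ofReal_im, neg_zero]

end CHFunction

section Helicoids

variable {k : ℕ} {n : Fin k → ℕ}

lemma Ublock_eq_re (j : Fin k) (z : EuclideanSpace ℝ ((j : Fin k) × (Fin (n j) ⊕ Fin (n j)))) :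
    Ublock k n j z = (complexSq (blockProj j z)).re :=
  (complexSq_re (blockProj j z)).symm

lemma Vblock_eq_im (j : Fin k) (z : EuclideanSpace ℝ ((j : Fin k) × (Fin (n j) ⊕ Fin (n j)))) :
    Vblock k n j z = (complexSq (blockProj j z)).im :=
  (complexSq_im (blockProj j z)).symm

lemma Fcomb_eq_sum_chFun (c : Fin k → ℝ) :
    Fcomb k n c = fun z => ∑ j, c j * chFun (blockProj j z) := by
  ext z
  simp only [Fcomb, chFun, Ublock_eq_re, Vblock_eq_im]

end Helicoids

/-- a linear combination of independent CH-functions is harmonic,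
infinity-harmonic, and satisfies the minimal hypersurface equation on the open set where
each `Uⱼ ≠ 0`; hence its (multi-valued) graph is minimal in `ℝ^{2(n₁+⋯+n_k)+1}`. -/
theorem generalized_helicoids (k : ℕ) (hk : 1 ≤ k) (n : Fin k → ℕ) (hn : ∀ j, 1 ≤ n j)
    (c : Fin k → ℝ) (z : EuclideanSpace ℝ ((j : Fin k) × (Fin (n j) ⊕ Fin (n j))))
    (hz : ∀ j, Ublock k n j z ≠ 0) :
    lap (Fcomb k n c) z = 0 ∧ infLap (Fcomb k n c) z = 0 ∧
    (1 + gradSq (Fcomb k n c) z) * lap (Fcomb k n c) z - infLap (Fcomb k n c) z = 0 := by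
  have hre (j : Fin k) : (complexSq (blockProj j z)).re ≠ 0 := Ublock_eq_re j z ▸ hz j
  have hsmooth (j : Fin k) : ContDiffAt ℝ 2 (fun y => c j * chFun y) (blockProj j z) :=
    contDiffAt_const.mul (contDiffAt_chFun (hre j))
  have hlap : lap (Fcomb k n c) z = 0 := by
    rw [Fcomb_eq_sum_chFun, lap_sum_blockProj hsmooth]
    exact Finset.sum_eq_zero fun j _ => by rw [lap_const_mul, lap_chFun (hre j), mul_zero]
  have hinfLap : infLap (Fcomb k n c) z = 0 := by
    rw [Fcomb_eq_sum_chFun, infLap_sum_blockProj hsmooth]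
    exact Finset.sum_eq_zero fun j _ => by rw [infLap_const_mul, infLap_chFun (hre j), mul_zero]
  exact ⟨hlap, hinfLap, by rw [hlap, hinfLap, mul_zero, sub_zero]⟩
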